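/- Let 1 < p ≤ q < ∞. Suppose the single testing condition holds: for every J ∈ 𝓛, ∫_J (Σ_{I ∈ 𝓛, I ⊆ J} α_I^q · 1_I)^{p/q} dν ≤ C₁^p · μ(J). Then for every f ∈ L^p(μ), ∫_X (Σ_{I ∈ 𝓛} |α_I · E_I^μ f|^q)^{p/q} dν ≤ C^p · ∫_X |f|^p dμ, where C is at most an absolute constant (depending only on p, q) times C₁. -/

import Mathlib

open MeasureTheory ENNReal NNReal Set Filter

/-- A lattice of measurable sets on a measurable space `X`: a union of countable
generations, each generation being a countable disjoint cover of `X`, and each set of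
generation `n` being a (countable) disjoint union of sets of generation `n+1`. -/
structure LatticeFamily (X : Type*) [MeasurableSpace X] where
  gen : ℤ → Set (Set X)
  countable : ∀ n, (gen n).Countable
  meas : ∀ n, ∀ I ∈ gen n, MeasurableSet I
  pairwiseDisjoint : ∀ n, (gen n).PairwiseDisjoint id
  cover : ∀ n, ⋃₀ gen n = univ
  subdiv : ∀ n, ∀ I ∈ gen n, ∃ S ⊆ gen (n + 1), I = ⋃₀ S

/-- The collection of all sets of the lattice. -/
def LatticeFamily.sets {X : Type*} [MeasurableSpace X] (L : LatticeFamily X) : Set (Set X) :=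
  ⋃ n, L.gen n

/-- The averaging operator `E_I^μ f = (μ(I)⁻¹ ∫_I f dμ) · 1_I`. -/
noncomputable def avgOp {X : Type*} [MeasurableSpace X] (μ : Measure X) (I : Set X)
    (f : X → ℝ≥0∞) : X → ℝ≥0∞ :=
  I.indicator fun _ => (∫⁻ y in I, f y ∂μ) / μ I

/-- The lattice maximal function `M_μ f(x) = sup {E_I^μ f(x) : I ∈ 𝓛, x ∈ I}`. -/
noncomputable def maxOp {X : Type*} [MeasurableSpace X] (L : LatticeFamily X) (μ : Measure X)
    (f : X → ℝ≥0∞) : X → ℝ≥0∞ := fun x =>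
  ⨆ (I : Set X) (_ : I ∈ L.sets ∧ x ∈ I), (∫⁻ y in I, f y ∂μ) / μ I

open Classical in
lemma aux_nested_step {X : Type*} [MeasurableSpace X] (L : LatticeFamily X) (m : ℤ) (d : ℕ) :
    ∀ I ∈ L.gen m, ∀ J ∈ L.gen (m + d), Disjoint I J ∨ J ⊆ I := by
  induction d generalizing m with
  | zero =>
    intro I hI J hJ
    by_cases h : I = J
    · right; rw [h]
    · left
      have hJ' : J ∈ L.gen m := by simpa using hJ
      exact L.pairwiseDisjoint m hI hJ' h
  | succ d ih =>
    intro I hI J hJ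
    obtain ⟨S, hS, rfl⟩ := L.subdiv m I hI
    have hJ' : J ∈ L.gen (m + 1 + d) := by
      have : m + ((d + 1 : ℕ) : ℤ) = m + 1 + d := by push_cast; ring
      rwa [this] at hJ
    by_cases h : ∃ K ∈ S, J ⊆ K
    · obtain ⟨K, hK, hJK⟩ := h
      right; exact hJK.trans (subset_sUnion_of_mem hK)
    · left
      push Not at h
      rw [disjoint_sUnion_left]
      intro K hK
      rcases ih (m + 1) K (hS hK) J hJ' with h1 | h1
      · exact h1
      · exact absurd h1 (h K hK)

lemma aux_nested {X : Type*} [MeasurableSpace X] (L : LatticeFamily X) {I J : Set X}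
    (hI : I ∈ L.sets) (hJ : J ∈ L.sets) : Disjoint I J ∨ I ⊆ J ∨ J ⊆ I := by
  obtain ⟨m, hm⟩ := mem_iUnion.1 hI
  obtain ⟨n, hn⟩ := mem_iUnion.1 hJ
  rcases le_total m n with h | h
  · obtain ⟨d, rfl⟩ := Int.le.dest h
    rcases aux_nested_step L m d I hm J hn with h | h <;> tauto
  · obtain ⟨d, rfl⟩ := Int.le.dest h
    rcases aux_nested_step L n d J hn I hm with h | h
    · left; exact h.symm
    · tauto

lemma aux_countable {X : Type*} [MeasurableSpace X] (L : LatticeFamily X) : L.sets.Countable :=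
  countable_iUnion L.countable

lemma aux_meas {X : Type*} [MeasurableSpace X] (L : LatticeFamily X) {I : Set X}
    (hI : I ∈ L.sets) : MeasurableSet I := by
  obtain ⟨m, hm⟩ := mem_iUnion.1 hI
  exact L.meas m I hm

lemma aux_rpow_sum_le {ι : Type*} (s : Finset ι) (b : ι → ℝ≥0∞) {r : ℝ} (hr : 0 < r)
    (hr1 : r ≤ 1) : (∑ i ∈ s, b i) ^ r ≤ ∑ i ∈ s, b i ^ r := by
  classical
  induction s using Finset.induction_on with
  | empty => simp [hr]
  | insert a s ha ih =>
    rw [Finset.sum_insert ha, Finset.sum_insert ha]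
    exact (ENNReal.rpow_add_le_add_rpow _ _ hr.le hr1).trans (by gcongr)

lemma aux_iSup_rpow {ι : Sort*} (b : ι → ℝ≥0∞) {r : ℝ} (hr : 0 < r) :
    (⨆ i, b i) ^ r = ⨆ i, b i ^ r :=
  (ENNReal.orderIsoRpow r hr).map_iSup b

lemma aux_rpow_tsum_le {ι : Type*} (b : ι → ℝ≥0∞) {r : ℝ} (hr : 0 < r)
    (hr1 : r ≤ 1) : (∑' i, b i) ^ r ≤ ∑' i, b i ^ r := by
  rw [ENNReal.tsum_eq_iSup_sum, aux_iSup_rpow _ hr]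
  exact iSup_le fun s => (aux_rpow_sum_le s b hr hr1).trans (ENNReal.sum_le_tsum s)

/-- weak-type bound for a finite family of sets with large averages. -/
lemma aux_level {X : Type*} [MeasurableSpace X] (L : LatticeFamily X) (μ ν : Measure X)
    (hμ : ∀ I ∈ L.sets, 0 < μ I ∧ μ I < ∞) (α : Set X → ℝ≥0) (C₁ : ℝ≥0∞) (p q : ℝ)
    (hp : 0 < p) (hq : 0 < q)
    (htest : ∀ J ∈ L.sets,
          ∫⁻ x in J, (∑' I : {I : Set X // I ∈ L.sets ∧ I ⊆ J},
              (α I.1 : ℝ≥0∞) ^ q * I.1.indicator 1 x) ^ (p / q) ∂ν ≤ C₁ ^ p * μ J)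
    (f : X → ℝ≥0∞) (hf : Measurable f) (l : ℝ≥0∞) (hl0 : l ≠ 0) (hl : l ≠ ∞)
    (D : Finset (Set X)) (hD : ∀ I ∈ D, I ∈ L.sets)
    (hDl : ∀ I ∈ D, 2 * l < (∫⁻ y in I, f y ∂μ) / μ I) :
    ∫⁻ x, (∑ I ∈ D, (α I : ℝ≥0∞) ^ q * I.indicator 1 x) ^ (p / q) ∂ν
      ≤ C₁ ^ p * (l⁻¹ * ∫⁻ x, {x | l < f x}.indicator f x ∂μ) := by
  classical
  have hpq : 0 < p / q := by positivity
  set M : Finset (Set X) := D.filter (fun J => Maximal (· ∈ D) J) with hM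
  set G : Set X → X → ℝ≥0∞ := fun J x => (∑' I : {I : Set X // I ∈ L.sets ∧ I ⊆ J},
              (α I.1 : ℝ≥0∞) ^ q * I.1.indicator 1 x) ^ (p / q) with hG
  have hMD : ∀ J ∈ M, J ∈ D := fun J hJ => (Finset.mem_filter.1 hJ).1
  have hMmax : ∀ J ∈ M, Maximal (· ∈ D) J := fun J hJ => (Finset.mem_filter.1 hJ).2
  have hmeas : ∀ J, Measurable (G J) := by
    intro J
    have : Countable {I : Set X // I ∈ L.sets ∧ I ⊆ J} :=
      ((aux_countable L).mono (fun I hI => hI.1 : {I | I ∈ L.sets ∧ I ⊆ J} ⊆ L.sets)).to_subtype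
    refine Measurable.pow_const (Measurable.tsum fun I => ?_) _
    exact (measurable_one.indicator (aux_meas L I.2.1)).const_mul _
  have hdisj : (M : Set (Set X)).PairwiseDisjoint id := by
    intro I hI J hJ hne
    rcases aux_nested L (hD I (hMD I hI)) (hD J (hMD J hJ)) with h | h | h
    · exact h
    · exact absurd (h.antisymm ((hMmax I hI).2 (hMD J hJ) h)) hne
    · exact absurd (((hMmax J hJ).2 (hMD I hI) h).antisymm h) hne
  have hcov : ∀ I ∈ D, ∃ J ∈ M, I ⊆ J := by
    intro I hI
    obtain ⟨J, hIJ, hJ⟩ := D.exists_le_maximal hI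
    exact ⟨J, Finset.mem_filter.2 ⟨hJ.1, hJ⟩, hIJ⟩
  have hpt : ∀ x, (∑ I ∈ D, (α I : ℝ≥0∞) ^ q * I.indicator 1 x) ^ (p / q)
      ≤ ∑ J ∈ M, J.indicator (G J) x := by
    intro x
    by_cases hx : ∃ J ∈ M, x ∈ J
    · obtain ⟨J, hJ, hxJ⟩ := hx
      refine le_trans ?_ (Finset.single_le_sum (f := fun J => J.indicator (G J) x)
        (fun _ _ => zero_le) hJ)
      simp only [indicator_of_mem hxJ, hG]
      gcongr
      have h1 : ∑ I ∈ D, (α I : ℝ≥0∞) ^ q * I.indicator 1 x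
          = ∑ I ∈ D.filter (· ⊆ J), (α I : ℝ≥0∞) ^ q * I.indicator 1 x := by
        symm
        apply Finset.sum_filter_of_ne
        intro I hI hne
        have hxI : x ∈ I := by
          by_contra h
          simp [h] at hne
        obtain ⟨J', hJ', hIJ'⟩ := hcov I hI
        by_cases h : J' = J
        · rwa [← h]
        · exact absurd hxJ (Set.disjoint_left.1 (hdisj hJ' hJ h) (hIJ' hxI))
      rw [h1]
      have h2 := ENNReal.sum_le_tsum (f := fun I : {I : Set X // I ∈ L.sets ∧ I ⊆ J} =>
        (α I.1 : ℝ≥0∞) ^ q * I.1.indicator 1 x)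
        ((D.filter (· ⊆ J)).subtype (fun I => I ∈ L.sets ∧ I ⊆ J))
      refine le_trans (le_of_eq ?_) h2
      rw [Finset.sum_subtype_of_mem (p := fun I => I ∈ L.sets ∧ I ⊆ J)
        (fun I => (α I : ℝ≥0∞) ^ q * I.indicator 1 x)]
      intro I hI
      exact ⟨hD I (Finset.mem_filter.1 hI).1, (Finset.mem_filter.1 hI).2⟩
    · push Not at hx
      rw [Finset.sum_eq_zero, ENNReal.zero_rpow_of_pos hpq]
      · exact zero_le
      intro I hI
      obtain ⟨J, hJ, hIJ⟩ := hcov I hI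
      have : x ∉ I := fun h => hx J hJ (hIJ h)
      simp [this]
  set h : X → ℝ≥0∞ := {x | l < f x}.indicator f with hh
  have hset : MeasurableSet {x | l < f x} := measurableSet_lt measurable_const hf
  have hhm : Measurable h := hf.indicator hset
  have hμJ : ∀ J ∈ M, μ J ≤ l⁻¹ * ∫⁻ x in J, h x ∂μ := by
    intro J hJ
    have hJs := hD J (hMD J hJ)
    obtain ⟨h0, h1⟩ := hμ J hJs
    have h2 := hDl J (hMD J hJ)
    rw [ENNReal.lt_div_iff_mul_lt (Or.inl h0.ne') (Or.inl h1.ne)] at h2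
    have h3 : ∫⁻ y in J, f y ∂μ ≤ ∫⁻ y in J, h y ∂μ + l * μ J := by
      rw [← setLIntegral_const, ← lintegral_add_left hhm]
      apply lintegral_mono
      intro y
      by_cases hy : l < f y
      · simp [hh, hy]
      · simp only [hh, indicator, mem_ofPred_eq, hy, if_false, zero_add]
        exact not_lt.1 hy
    have h4 : l * μ J + l * μ J ≤ ∫⁻ y in J, h y ∂μ + l * μ J := by
      rw [← two_mul, ← mul_assoc]; exact h2.le.trans h3
    have h5 : l * μ J ≠ ∞ := ENNReal.mul_ne_top hl h1.ne
    have h6 := (ENNReal.add_le_add_iff_right h5).1 h4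
    calc μ J = l⁻¹ * (l * μ J) := by rw [← mul_assoc, ENNReal.inv_mul_cancel hl0 hl, one_mul]
      _ ≤ _ := by gcongr
  calc ∫⁻ x, (∑ I ∈ D, (α I : ℝ≥0∞) ^ q * I.indicator 1 x) ^ (p / q) ∂ν
      ≤ ∫⁻ x, ∑ J ∈ M, J.indicator (G J) x ∂ν := lintegral_mono hpt
    _ = ∑ J ∈ M, ∫⁻ x in J, G J x ∂ν := by
        rw [lintegral_finsetSum]
        · refine Finset.sum_congr rfl fun J hJ => ?_
          rw [lintegral_indicator (aux_meas L (hD J (hMD J hJ)))]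
        · intro J hJ
          exact (hmeas J).indicator (aux_meas L (hD J (hMD J hJ)))
    _ ≤ ∑ J ∈ M, C₁ ^ p * μ J := Finset.sum_le_sum fun J hJ => htest J (hD J (hMD J hJ))
    _ ≤ ∑ J ∈ M, C₁ ^ p * (l⁻¹ * ∫⁻ x in J, h x ∂μ) := by
        refine Finset.sum_le_sum fun J hJ => ?_
        gcongr
        exact hμJ J hJ
    _ = C₁ ^ p * (l⁻¹ * ∫⁻ x in ⋃ J ∈ M, J, h x ∂μ) := by
        have hbi := lintegral_biUnion_finset (μ := μ) hdisj
          (fun J hJ => aux_meas L (hD J (hMD J hJ))) h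
        simp only [id] at hbi
        rw [← Finset.mul_sum, ← Finset.mul_sum, hbi]
    _ ≤ _ := by
        gcongr
        exact Measure.restrict_le_self

lemma aux_two_rpow_pos (x : ℝ) : (2 : ℝ≥0∞) ^ x ≠ 0 :=
  (ENNReal.rpow_pos (by norm_num) (by norm_num)).ne'

lemma aux_two_rpow_top (x : ℝ) : (2 : ℝ≥0∞) ^ x ≠ ∞ :=
  ENNReal.rpow_ne_top_of_ne_zero (by norm_num) (by norm_num)

lemma aux_exists_dyadic (t : ℝ≥0∞) (h0 : t ≠ 0) (h : t ≠ ∞) :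
    ∃ m : ℤ, (2 : ℝ≥0∞) ^ (m : ℝ) < t ∧ t ≤ 2 ^ ((m : ℝ) + 1) := by
  lift t to ℝ≥0 using h
  have ht : 0 < t := by
    rw [pos_iff_ne_zero]; exact_mod_cast h0
  obtain ⟨m, h1, h2⟩ := exists_mem_Ioc_zpow ht (one_lt_two : (1 : ℝ≥0) < 2)
  refine ⟨m, ?_, ?_⟩
  · rw [ENNReal.rpow_intCast]
    have := ENNReal.coe_lt_coe.2 h1
    rwa [ENNReal.coe_zpow (by norm_num)] at this
  · have e : (m : ℝ) + 1 = ((m + 1 : ℤ) : ℝ) := by push_cast; ring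
    rw [e, ENNReal.rpow_intCast]
    have := ENNReal.coe_le_coe.2 h2
    rwa [ENNReal.coe_zpow (by norm_num)] at this

/-- upper bound of a power by a dyadic sum. -/
lemma aux_dyadic_upper (q : ℝ) (hq : 0 < q) (a : ℝ≥0∞) :
    a ^ q ≤ ∑' k : ℤ, (if 2 * (2 : ℝ≥0∞) ^ (k : ℝ) < a then (2 : ℝ≥0∞) ^ (((k : ℝ) + 2) * q)
      else 0) := by
  by_cases h0 : a = 0
  · simp [h0, hq]
  by_cases h : a = ∞
  · subst h
    have h1 : ∀ k : ℤ, 2 * (2 : ℝ≥0∞) ^ (k : ℝ) < ∞ := fun k =>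
      (ENNReal.mul_ne_top (by norm_num) (aux_two_rpow_top _)).lt_top
    simp only [h1, if_true]
    have h2 : ∑' n : ℕ, (1 : ℝ≥0∞) = ∞ := ENNReal.tsum_const_eq_top_of_ne_zero one_ne_zero
    rw [ENNReal.top_rpow_of_pos hq, ← h2]
    refine le_trans ?_ (ENNReal.tsum_comp_le_tsum_of_injective (Nat.cast_injective (R := ℤ)) _)
    refine ENNReal.tsum_le_tsum fun n => ?_
    apply ENNReal.one_le_rpow (by norm_num)
    simp only [Int.cast_natCast]
    positivity
  · obtain ⟨m, h1, h2⟩ := aux_exists_dyadic a h0 h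
    refine le_trans ?_ (ENNReal.le_tsum (m - 1))
    have e : 2 * (2 : ℝ≥0∞) ^ ((m - 1 : ℤ) : ℝ) = 2 ^ (m : ℝ) := by
      have : (m : ℝ) = 1 + ((m - 1 : ℤ) : ℝ) := by push_cast; ring
      rw [this, ENNReal.rpow_add _ _ (by norm_num) (by norm_num), ENNReal.rpow_one]
    rw [e, if_pos h1, ENNReal.rpow_mul]
    gcongr
    convert h2 using 2
    push_cast; ring

/-- lower bound: geometric sum -/
lemma aux_dyadic_lower (p : ℝ) (hp : 1 < p) : ∃ K : ℝ≥0∞, 0 < K ∧ K < ∞ ∧ ∀ t : ℝ≥0∞,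
    ∑' k : ℤ, (2 : ℝ≥0∞) ^ (((k : ℝ) + 2) * p) *
      (((2 : ℝ≥0∞) ^ (k : ℝ))⁻¹ * (if (2 : ℝ≥0∞) ^ (k : ℝ) < t then t else 0)) ≤ K * t ^ p := by
  set r : ℝ≥0∞ := 2 ^ (-(p - 1)) with hr
  have hr1 : r < 1 := ENNReal.rpow_lt_one_of_one_lt_of_neg (by norm_num) (by linarith)
  have hK0 : (2 : ℝ≥0∞) ^ (2 * p) * (1 - r)⁻¹ ≠ 0 := by
    refine mul_ne_zero (aux_two_rpow_pos _) ?_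
    exact ENNReal.inv_ne_zero.2 (ne_top_of_le_ne_top (by norm_num) tsub_le_self)
  refine ⟨2 ^ (2 * p) * (1 - r)⁻¹, pos_iff_ne_zero.2 hK0, ?_, ?_⟩
  · refine ENNReal.mul_lt_top (aux_two_rpow_top _).lt_top ?_
    rw [ENNReal.inv_lt_top]
    exact tsub_pos_of_lt hr1
  intro t
  by_cases h : t = ∞
  · rw [h, ENNReal.top_rpow_of_pos (by linarith), ENNReal.mul_top hK0]; exact le_top
  by_cases h0 : t = 0
  · simp [h0]
  obtain ⟨m, h1, h2⟩ := aux_exists_dyadic t h0 h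
  have hinj : Function.Injective (fun j : ℕ => m - (j : ℤ)) := by
    intro a b hab
    simpa using hab
  rw [← hinj.tsum_eq]
  · have hterm : ∀ j : ℕ, (2 : ℝ≥0∞) ^ ((((m - (j : ℤ) : ℤ) : ℝ) + 2) * p) *
      (((2 : ℝ≥0∞) ^ ((m - (j : ℤ) : ℤ) : ℝ))⁻¹ *
        (if (2 : ℝ≥0∞) ^ ((m - (j : ℤ) : ℤ) : ℝ) < t then t else 0))
        ≤ (2 ^ (2 * p) * t ^ p) * r ^ j := by
      intro j
      have h3 : (2 : ℝ≥0∞) ^ ((m : ℝ) * (p - 1)) ≤ t ^ (p - 1) := by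
        rw [ENNReal.rpow_mul]
        exact ENNReal.rpow_le_rpow h1.le (by linarith)
      calc _ ≤ (2 : ℝ≥0∞) ^ ((((m - (j : ℤ) : ℤ) : ℝ) + 2) * p) *
            (((2 : ℝ≥0∞) ^ ((m - (j : ℤ) : ℤ) : ℝ))⁻¹ * t) := by
              gcongr; split_ifs
              · exact le_rfl
              · exact zero_le
        _ = 2 ^ (2 * p) * (2 ^ ((m : ℝ) * (p - 1)) * t) * r ^ j := by
            rw [← ENNReal.rpow_neg, hr, ← ENNReal.rpow_natCast, ← ENNReal.rpow_mul]
            have e : (2 : ℝ≥0∞) ^ ((((m - (j : ℤ) : ℤ) : ℝ) + 2) * p) *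
              2 ^ (-((m - (j : ℤ) : ℤ) : ℝ)) = 2 ^ (2 * p) * 2 ^ ((m : ℝ) * (p - 1)) *
                2 ^ (-(p - 1) * (j : ℝ)) := by
              rw [← ENNReal.rpow_add _ _ (by norm_num) (by norm_num),
                ← ENNReal.rpow_add _ _ (by norm_num) (by norm_num),
                ← ENNReal.rpow_add _ _ (by norm_num) (by norm_num)]
              congr 1
              push_cast; ring
            rw [← mul_assoc, e]; ring
        _ ≤ 2 ^ (2 * p) * (t ^ (p - 1) * t) * r ^ j := by gcongr
        _ = _ := by
            have e : t ^ (p - 1) * t = t ^ p := by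
              conv_lhs => rw [← ENNReal.rpow_one t, ← ENNReal.rpow_mul,
                ← ENNReal.rpow_add _ _ h0 h]
              congr 1; ring
            rw [e]
    refine (ENNReal.tsum_le_tsum hterm).trans ?_
    rw [ENNReal.tsum_mul_left, ENNReal.tsum_geometric]
    apply le_of_eq; ring
  · intro k hk
    have hkt : (2 : ℝ≥0∞) ^ (k : ℝ) < t := by
      by_contra hc
      exact hk (by simp only [if_neg hc, mul_zero])
    have hkm : (k : ℝ) < (m : ℝ) + 1 := by
      by_contra hc
      exact absurd (hkt.trans_le h2)
        (not_lt.2 (ENNReal.rpow_le_rpow_of_exponent_le (by norm_num) (not_lt.1 hc)))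
    have hkm' : k < m + 1 := by exact_mod_cast hkm
    refine ⟨(m - k).toNat, ?_⟩
    have : ((m - k).toNat : ℤ) = m - k := Int.toNat_of_nonneg (by omega)
    simp only [this]; ring

lemma aux_finite {X : Type*} [MeasurableSpace X] (L : LatticeFamily X) (μ ν : Measure X)
    (hμ : ∀ I ∈ L.sets, 0 < μ I ∧ μ I < ∞) (α : Set X → ℝ≥0) (C₁ : ℝ≥0∞) (p q : ℝ)
    (hp : 1 < p) (hpq : p ≤ q)
    (htest : ∀ J ∈ L.sets,
          ∫⁻ x in J, (∑' I : {I : Set X // I ∈ L.sets ∧ I ⊆ J},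
              (α I.1 : ℝ≥0∞) ^ q * I.1.indicator 1 x) ^ (p / q) ∂ν ≤ C₁ ^ p * μ J)
    (f : X → ℝ≥0∞) (hf : Measurable f) (K : ℝ≥0∞)
    (hK : ∀ t : ℝ≥0∞, ∑' k : ℤ, (2 : ℝ≥0∞) ^ (((k : ℝ) + 2) * p) *
      (((2 : ℝ≥0∞) ^ (k : ℝ))⁻¹ * (if (2 : ℝ≥0∞) ^ (k : ℝ) < t then t else 0)) ≤ K * t ^ p)
    (A : Finset (Set X)) (hA : ∀ I ∈ A, I ∈ L.sets) :
    ∫⁻ x, (∑ I ∈ A, ((α I : ℝ≥0∞) * avgOp μ I f x) ^ q) ^ (p / q) ∂ν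
      ≤ C₁ ^ p * (K * ∫⁻ x, f x ^ p ∂μ) := by
  classical
  have hq : 0 < q := by linarith
  have hp0 : 0 < p := by linarith
  have hpq0 : 0 < p / q := by positivity
  have hpq1 : p / q ≤ 1 := (div_le_one hq).2 hpq
  set D : ℤ → Finset (Set X) := fun k =>
    A.filter (fun I => 2 * (2 : ℝ≥0∞) ^ (k : ℝ) < (∫⁻ y in I, f y ∂μ) / μ I) with hD
  set S : ℤ → X → ℝ≥0∞ := fun k x => ∑ I ∈ D k, (α I : ℝ≥0∞) ^ q * I.indicator 1 x with hS
  have hSm : ∀ k, Measurable (S k) := fun k =>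
    Finset.measurable_sum _ fun I hI =>
      (measurable_one.indicator (aux_meas L (hA I (Finset.mem_filter.1 hI).1))).const_mul _
  have hpt : ∀ x, (∑ I ∈ A, ((α I : ℝ≥0∞) * avgOp μ I f x) ^ q) ^ (p / q)
      ≤ ∑' k : ℤ, (2 : ℝ≥0∞) ^ (((k : ℝ) + 2) * p) * S k x ^ (p / q) := by
    intro x
    have h1 : ∑ I ∈ A, ((α I : ℝ≥0∞) * avgOp μ I f x) ^ q
        ≤ ∑' k : ℤ, (2 : ℝ≥0∞) ^ (((k : ℝ) + 2) * q) * S k x := by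
      calc _ ≤ ∑ I ∈ A, ∑' k : ℤ, (if 2 * (2 : ℝ≥0∞) ^ (k : ℝ) < (∫⁻ y in I, f y ∂μ) / μ I then
              (2 : ℝ≥0∞) ^ (((k : ℝ) + 2) * q) * ((α I : ℝ≥0∞) ^ q * I.indicator 1 x) else 0) := by
            refine Finset.sum_le_sum fun I hI => ?_
            by_cases hx : x ∈ I
            · have h2 := aux_dyadic_upper q hq ((∫⁻ y in I, f y ∂μ) / μ I)
              rw [ENNReal.mul_rpow_of_nonneg _ _ hq.le]
              simp only [avgOp, indicator_of_mem hx, Pi.one_apply, mul_one]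
              refine (mul_le_mul_right h2 _).trans ?_
              rw [← ENNReal.tsum_mul_left]
              refine ENNReal.tsum_le_tsum fun k => le_of_eq ?_
              split_ifs
              · ring
              · simp
            · simp [avgOp, hx, hq]
        _ = ∑' k : ℤ, ∑ I ∈ A, (if 2 * (2 : ℝ≥0∞) ^ (k : ℝ) < (∫⁻ y in I, f y ∂μ) / μ I then
              (2 : ℝ≥0∞) ^ (((k : ℝ) + 2) * q) * ((α I : ℝ≥0∞) ^ q * I.indicator 1 x) else 0) :=
            (Summable.tsum_finsetSum fun _ _ => ENNReal.summable).symm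
        _ = _ := by
            refine tsum_congr fun k => ?_
            rw [← Finset.sum_filter, ← Finset.mul_sum]
    refine (ENNReal.rpow_le_rpow h1 hpq0.le).trans ?_
    refine (aux_rpow_tsum_le _ hpq0 hpq1).trans (le_of_eq ?_)
    refine tsum_congr fun k => ?_
    rw [ENNReal.mul_rpow_of_nonneg _ _ hpq0.le, ← ENNReal.rpow_mul]
    congr 2
    field_simp
  have hind : ∀ k : ℤ, Measurable ({x | (2 : ℝ≥0∞) ^ (k : ℝ) < f x}.indicator f) := fun k =>
    hf.indicator (measurableSet_lt measurable_const hf)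
  calc _ ≤ ∫⁻ x, ∑' k : ℤ, (2 : ℝ≥0∞) ^ (((k : ℝ) + 2) * p) * S k x ^ (p / q) ∂ν :=
        lintegral_mono hpt
    _ = ∑' k : ℤ, (2 : ℝ≥0∞) ^ (((k : ℝ) + 2) * p) * ∫⁻ x, S k x ^ (p / q) ∂ν := by
        rw [lintegral_tsum fun k => (((hSm k).pow_const _).const_mul _).aemeasurable]
        exact tsum_congr fun k => lintegral_const_mul _ ((hSm k).pow_const _)
    _ ≤ ∑' k : ℤ, (2 : ℝ≥0∞) ^ (((k : ℝ) + 2) * p) * (C₁ ^ p * (((2 : ℝ≥0∞) ^ (k : ℝ))⁻¹ *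
          ∫⁻ x, {x | (2 : ℝ≥0∞) ^ (k : ℝ) < f x}.indicator f x ∂μ)) := by
        refine ENNReal.tsum_le_tsum fun k => ?_
        gcongr
        exact aux_level L μ ν hμ α C₁ p q hp0 hq htest f hf _ (aux_two_rpow_pos _)
          (aux_two_rpow_top _) (D k) (fun I hI => hA I (Finset.mem_filter.1 hI).1)
          (fun I hI => (Finset.mem_filter.1 hI).2)
    _ = C₁ ^ p * ∫⁻ x, ∑' k : ℤ, (2 : ℝ≥0∞) ^ (((k : ℝ) + 2) * p) * (((2 : ℝ≥0∞) ^ (k : ℝ))⁻¹ *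
          {x | (2 : ℝ≥0∞) ^ (k : ℝ) < f x}.indicator f x) ∂μ := by
        rw [lintegral_tsum fun k => (((hind k).const_mul _).const_mul _).aemeasurable,
          ← ENNReal.tsum_mul_left]
        refine tsum_congr fun k => ?_
        rw [lintegral_const_mul _ ((hind k).const_mul _), lintegral_const_mul _ (hind k)]
        ring
    _ ≤ C₁ ^ p * ∫⁻ x, K * f x ^ p ∂μ := by
        gcongr with x
        refine le_trans (le_of_eq ?_) (hK (f x))
        simp only [indicator_apply, mem_ofPred_eq]
    _ = _ := by rw [lintegral_const_mul _ (hf.pow_const _)]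

/-- For `1 < p ≤ q < ∞`, the single testing condition with constant `C₁`
implies the vector-valued inequality
`∫ (∑_{I ∈ 𝓛} |α_I E_I^μ f|^q)^{p/q} dν ≤ C^p ∫ |f|^p dμ` with `C ≤ c(p,q) · C₁`. -/
theorem vector_valued_sufficiency_p_le_q (p q : ℝ) (hp : 1 < p) (hpq : p ≤ q) :
    ∃ c : ℝ≥0∞, 0 < c ∧ c < ∞ ∧
      ∀ (X : Type) [MeasurableSpace X] (L : LatticeFamily X) (μ ν : Measure X),
        (∀ I ∈ L.sets, 0 < μ I ∧ μ I < ∞) → (∀ I ∈ L.sets, ν I < ∞) →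
        ∀ (α : Set X → ℝ≥0) (C₁ : ℝ≥0∞),
        (∀ J ∈ L.sets,
          ∫⁻ x in J, (∑' I : {I : Set X // I ∈ L.sets ∧ I ⊆ J},
              (α I.1 : ℝ≥0∞) ^ q * I.1.indicator 1 x) ^ (p / q) ∂ν ≤ C₁ ^ p * μ J) →
        ∀ f : X → ℝ≥0∞, Measurable f →
          ∫⁻ x, (∑' I : L.sets, ((α I.1 : ℝ≥0∞) * avgOp μ I.1 f x) ^ q) ^ (p / q) ∂ν
            ≤ (c * C₁) ^ p * ∫⁻ x, f x ^ p ∂μ := by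
  classical
  obtain ⟨K, hK0, hK1, hK⟩ := aux_dyadic_lower p hp
  have hp0 : 0 < p := by linarith
  have hq : 0 < q := by linarith
  have hpq0 : 0 < p / q := by positivity
  refine ⟨K ^ (1 / p), ENNReal.rpow_pos hK0 hK1.ne,
    ENNReal.rpow_lt_top_of_nonneg (by positivity) hK1.ne, ?_⟩
  intro X _ L μ ν hμ hν α C₁ htest f hf
  have : Countable L.sets := (aux_countable L).to_subtype
  have hm : ∀ I : L.sets, Measurable fun x => ((α I.1 : ℝ≥0∞) * avgOp μ I.1 f x) ^ q := fun I =>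
    ((measurable_const.indicator (aux_meas L I.2)).const_mul _).pow_const _
  have e : (K ^ (1 / p) * C₁) ^ p = C₁ ^ p * K := by
    rw [ENNReal.mul_rpow_of_nonneg _ _ hp0.le, ← ENNReal.rpow_mul, one_div_mul_cancel hp0.ne',
      ENNReal.rpow_one, mul_comm]
  rw [e, mul_assoc]
  simp only [ENNReal.tsum_eq_iSup_sum, aux_iSup_rpow _ hpq0]
  rw [lintegral_iSup_directed]
  · refine iSup_le fun s => ?_
    have h1 := aux_finite L μ ν hμ α C₁ p q hp hpq htest f hf K hK
      (s.map (Function.Embedding.subtype _)) (by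
        intro I hI
        obtain ⟨J, _, rfl⟩ := Finset.mem_map.1 hI
        exact J.2)
    simpa only [Finset.sum_map, Function.Embedding.subtype_apply] using h1
  · intro s
    exact ((Finset.measurable_sum _ fun I _ => hm I).pow_const _).aemeasurable
  · apply Monotone.directed_le
    intro s t hst x
    exact ENNReal.rpow_le_rpow (Finset.sum_le_sum_of_subset hst) hpq0.le
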